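/- Under the assumptions: F is differentiable, L-smooth and μ-strongly convex; each G_j is convex and c-Lipschitz; H = F + G has the unique minimizer x*; the stepsize is constant α ∈ (0, 2μ/(3L²)); Γ = 2αμ − 3α²L² and δ = 7m²c²α². Then the BlockProx iterates satisfy, for every k ≥ 0: E[H(x^{(k)}) − H(x*)] ≤ ( (L/2)·‖x^{(0)} − x*‖² + 2mc·‖x^{(0)} − x*‖ )·(1 − Γ)^{k/2} + L·δ/(2Γ) + 2mc·√(δ/Γ). -/

import Mathlib

open scoped RealInnerProductSpace

open scoped BigOperators NNReal

/-!
Conditionally on the past, each block of the next BlockProx iterate is a block of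
`prox_{mαG_j}(z)` with `j` uniform, so the mean squared distance to `x*` after one step is the
average over `j` of the squared distances of the full proximal points. The three-point inequality
for each proximal point, the optimality conditions at `x*` (which also give `‖∇F(x*)‖ ≤ mc`) and
strong convexity bound this average by `(1 − Γ)‖x − x*‖² + δ`; iterating,
`E‖x^{(k)} − x*‖² ≤ (1 − Γ)^k ‖x⁰ − x*‖² + δ/Γ`. The objective gap is at most
`(L/2)‖x − x*‖² + 2mc‖x − x*‖`, and Jensen's inequality controls the first moment by the second.
-/

section FiniteSums

variable {J : Type*} [Fintype J]

theorem convexOn_fintype_sum {E : Type*} [AddCommGroup E] [Module ℝ E] {s : Set E}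
    {G : J → E → ℝ} (hs : Convex ℝ s) (hG : ∀ j, ConvexOn ℝ s (G j)) :
    ConvexOn ℝ s fun x => ∑ j, G j x := by
  have h : ConvexOn ℝ s (∑ j, G j) := Finset.sum_induction G (ConvexOn ℝ s)
    (fun _ _ => ConvexOn.add) (convexOn_const 0 hs) fun j _ => hG j
  exact h.congr fun x _ => Finset.sum_apply x _ _

theorem lipschitzWith_fintype_sum {α : Type*} [PseudoMetricSpace α] {G : J → α → ℝ} {K : J → ℝ≥0}
    (hG : ∀ j, LipschitzWith (K j) (G j)) : LipschitzWith (∑ j, K j) fun x => ∑ j, G j x :=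
  LipschitzWith.of_dist_le_mul fun x y => by
    rw [NNReal.coe_sum, Finset.sum_mul]
    exact dist_sum_sum_le_of_le _ fun j _ => (hG j).dist_le_mul x y

end FiniteSums

section CompositeMinimization

variable {E : Type*} [NormedAddCommGroup E] [InnerProductSpace ℝ E] [CompleteSpace E]

theorem hasDerivAt_comp_line_of_hasGradientAt {P : E → ℝ} {p x v : E} {t : ℝ}
    (hP : HasGradientAt P p (x + t • v)) :
    HasDerivAt (fun s : ℝ => P (x + s • v)) ⟪p, v⟫ t := by
  have hline : HasDerivAt (fun s : ℝ => x + s • v) v t := by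
    simpa using ((hasDerivAt_id t).smul_const v).const_add x
  exact (hP.hasFDerivAt.comp_hasDerivAt t hline).congr_deriv (by simp)

theorem sub_le_inner_gradient_of_isMinOn_add {P Q : E → ℝ} {p x₀ : E}
    (hP : HasGradientAt P p x₀) (hQ : ConvexOn ℝ Set.univ Q)
    (hmin : IsMinOn (fun y => P y + Q y) Set.univ x₀) (x : E) :
    Q x₀ - Q x ≤ ⟪p, x - x₀⟫ := by
  -- Replacing `Q` by its chord on `[x₀, x]` gives a differentiable function of `t` which
  -- majorizes `P + Q` and agrees with it at `t = 0`, so it is still minimal there.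
  let φ : ℝ → ℝ := fun t => P (x₀ + t • (x - x₀)) + t * (Q x - Q x₀)
  have hφ : HasDerivAt φ (⟪p, x - x₀⟫ + 1 * (Q x - Q x₀)) 0 :=
    (hasDerivAt_comp_line_of_hasGradientAt (by simpa using hP)).add
      ((hasDerivAt_id (0 : ℝ)).mul_const (Q x - Q x₀))
  have hφmin : IsMinOn φ (Set.Icc 0 1) 0 := isMinOn_iff.2 fun t ⟨ht0, ht1⟩ => by
    have hchord := hQ.2 (Set.mem_univ x₀) (Set.mem_univ x) (sub_nonneg.2 ht1) ht0 (by ring)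
    have hpoint : (1 - t) • x₀ + t • x = x₀ + t • (x - x₀) := by module
    have hle := isMinOn_univ_iff.1 hmin (x₀ + t • (x - x₀))
    simp only [hpoint, smul_eq_mul] at hchord
    simp only [φ, zero_smul, add_zero, zero_mul]
    linarith
  have hdir : (1 : ℝ) ∈ posTangentConeAt (Set.Icc (0 : ℝ) 1) 0 :=
    mem_posTangentConeAt_of_segment_subset (by simp [segment_eq_Icc])
  have hslope := hφmin.localize.hasFDerivWithinAt_nonneg hφ.hasFDerivAt.hasFDerivWithinAt hdir
  simp only [ContinuousLinearMap.toSpanSingleton_apply, one_smul, one_mul] at hslope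
  linarith

theorem norm_gradient_le_of_isMinOn_add {P Q : E → ℝ} {p x₀ : E} {K : ℝ≥0}
    (hP : HasGradientAt P p x₀) (hQ : LipschitzWith K Q)
    (hmin : IsMinOn (fun y => P y + Q y) Set.univ x₀) : ‖p‖ ≤ K := by
  -- The minimizer survives replacing `Q` by the convex majorant `Q x₀ + K * dist · x₀`.
  have hconv : ConvexOn ℝ Set.univ fun y => K * dist y x₀ :=
    (convexOn_dist x₀ convex_univ).smul K.coe_nonneg
  have hmin' : IsMinOn (fun y => P y + K * dist y x₀) Set.univ x₀ :=
    isMinOn_univ_iff.2 fun y => by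
      have hle := isMinOn_univ_iff.1 hmin y
      rw [dist_self]
      linarith [hQ.le_add_mul y x₀]
  have hsq := sub_le_inner_gradient_of_isMinOn_add hP hconv hmin' (x₀ - p)
  simp only [dist_self, mul_zero, zero_sub, dist_eq_norm, sub_sub_cancel_left, norm_neg,
    inner_neg_right, real_inner_self_eq_norm_sq, neg_le_neg_iff, sq] at hsq
  rcases (norm_nonneg p).eq_or_lt with hp | hp
  · exact hp ▸ K.coe_nonneg
  · exact le_of_mul_le_mul_right hsq hp

theorem le_add_inner_gradient_add_norm_sq {F : E → ℝ} {g : E → E} {L : ℝ≥0}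
    (hF : ∀ x, HasGradientAt F (g x) x) (hg : LipschitzWith L g) (x y : E) :
    F y ≤ F x + ⟪g x, y - x⟫ + L / 2 * ‖y - x‖ ^ 2 := by
  set v := y - x with hv
  have hline (t : ℝ) : HasDerivAt (fun s : ℝ => F (x + s • v)) ⟪g (x + t • v), v⟫ t :=
    hasDerivAt_comp_line_of_hasGradientAt (hF _)
  have hmodel (t : ℝ) : HasDerivAt (fun s : ℝ => F x + s * ⟪g x, v⟫ + L / 2 * ‖v‖ ^ 2 * s ^ 2)
      (⟪g x, v⟫ + L * ‖v‖ ^ 2 * t) t := by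
    have hlin := ((hasDerivAt_id t).mul_const ⟪g x, v⟫).const_add (F x)
    have hquad := (hasDerivAt_pow 2 t).const_mul (L / 2 * ‖v‖ ^ 2)
    exact (hlin.add hquad).congr_deriv (by push_cast; ring)
  have hslope (t : ℝ) (ht : t ∈ Set.Ico (0 : ℝ) 1) :
      ⟪g (x + t • v), v⟫ ≤ ⟪g x, v⟫ + L * ‖v‖ ^ 2 * t := by
    have hgt : ‖g (x + t • v) - g x‖ ≤ L * (t * ‖v‖) := by
      simpa [norm_smul, abs_of_nonneg ht.1] using hg.norm_sub_le (x + t • v) x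
    calc ⟪g (x + t • v), v⟫ = ⟪g x, v⟫ + ⟪g (x + t • v) - g x, v⟫ := by
          rw [inner_sub_left]; ring
      _ ≤ ⟪g x, v⟫ + L * (t * ‖v‖) * ‖v‖ := by
          gcongr
          exact (real_inner_le_norm _ _).trans (by gcongr)
      _ = ⟪g x, v⟫ + L * ‖v‖ ^ 2 * t := by ring
  have h := image_le_of_deriv_right_le_deriv_boundary
    (fun t _ => (hline t).continuousAt.continuousWithinAt)
    (fun t _ => (hline t).hasDerivWithinAt) (by simp)
    (fun t _ => (hmodel t).continuousAt.continuousWithinAt)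
    (fun t _ => (hmodel t).hasDerivWithinAt) hslope (Set.right_mem_Icc.2 zero_le_one)
  simpa [hv] using h

theorem sub_le_norm_sq_add_norm_of_isMinOn_add {F Q : E → ℝ} {g : E → E} {L K : ℝ≥0}
    (hF : ∀ x, HasGradientAt F (g x) x) (hg : LipschitzWith L g) (hQ : LipschitzWith K Q)
    {x₀ : E} (hmin : IsMinOn (fun y => F y + Q y) Set.univ x₀) (x : E) :
    F x + Q x - (F x₀ + Q x₀) ≤ L / 2 * ‖x - x₀‖ ^ 2 + 2 * K * ‖x - x₀‖ := by
  have hsmooth := le_add_inner_gradient_add_norm_sq hF hg x₀ x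
  have hlip := hQ.le_add_mul x x₀
  rw [dist_eq_norm] at hlip
  have hinner : ⟪g x₀, x - x₀⟫ ≤ K * ‖x - x₀‖ :=
    (real_inner_le_norm _ _).trans <| by
      gcongr
      exact norm_gradient_le_of_isMinOn_add (hF x₀) hQ hmin
  linarith

end CompositeMinimization

section StrongConvexity

variable {E : Type*} [NormedAddCommGroup E] [InnerProductSpace ℝ E] {F : E → ℝ} {g : E → E}
  {μ : ℝ}

theorem mul_norm_sub_sq_le_inner_gradient_sub
    (hsc : ∀ x y, F x + ⟪g x, y - x⟫ + μ / 2 * ‖y - x‖ ^ 2 ≤ F y) (x y : E) :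
    μ * ‖x - y‖ ^ 2 ≤ ⟪g x - g y, x - y⟫ := by
  have hxy := hsc x y
  have hyx := hsc y x
  rw [← neg_sub x y, inner_neg_right, norm_neg] at hxy
  rw [inner_sub_left]
  linarith

theorem strongConvexity_const_le_lipschitz_const [Nontrivial E] {L : ℝ≥0}
    (hsc : ∀ x y, F x + ⟪g x, y - x⟫ + μ / 2 * ‖y - x‖ ^ 2 ≤ F y) (hg : LipschitzWith L g) :
    μ ≤ L := by
  obtain ⟨x, y, hxy⟩ := exists_pair_ne E
  have hpos : 0 < ‖x - y‖ := norm_sub_pos_iff.2 hxy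
  refine le_of_mul_le_mul_right ?_ (pow_pos hpos 2)
  calc μ * ‖x - y‖ ^ 2 ≤ ⟪g x - g y, x - y⟫ := mul_norm_sub_sq_le_inner_gradient_sub hsc x y
    _ ≤ ‖g x - g y‖ * ‖x - y‖ := real_inner_le_norm _ _
    _ ≤ L * ‖x - y‖ * ‖x - y‖ := by gcongr; exact hg.norm_sub_le x y
    _ = L * ‖x - y‖ ^ 2 := by ring

end StrongConvexity

section ProximalPoint

/-- `y` is a proximal point of `Q` at `z` with parameter `β`, i.e. `y ∈ prox_{βQ}(z)`. As a
relation, the notion is available without a proof that the minimizer exists and is unique. -/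
def IsProx {E : Type*} [NormedAddCommGroup E] (Q : E → ℝ) (β : ℝ) (z y : E) : Prop :=
  IsMinOn (fun u => Q u + 1 / (2 * β) * ‖z - u‖ ^ 2) Set.univ y

variable {E : Type*} [NormedAddCommGroup E] [InnerProductSpace ℝ E] [CompleteSpace E] {Q : E → ℝ}
  {β : ℝ} {y z : E}

theorem hasGradientAt_const_mul_norm_sub_sq (a : ℝ) (z y : E) :
    HasGradientAt (fun u => a * ‖z - u‖ ^ 2) ((2 * a) • (y - z)) y := by
  rw [hasGradientAt_iff_hasFDerivAt]
  refine ((((hasFDerivAt_id y).const_sub z).norm_sq).const_mul a).congr_fderiv ?_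
  ext v
  simp
  ring

theorem IsProx.norm_sub_sq_le (hβ : 0 < β) (hQ : ConvexOn ℝ Set.univ Q) (hy : IsProx Q β z y)
    (u : E) : ‖y - u‖ ^ 2 ≤ ‖z - u‖ ^ 2 - ‖z - y‖ ^ 2 + 2 * β * (Q u - Q y) := by
  have hmin : IsMinOn (fun v => 1 / (2 * β) * ‖z - v‖ ^ 2 + Q v) Set.univ y := by
    simpa only [IsProx, add_comm] using hy
  have hopt : β * (Q y - Q u) ≤ ⟪y - z, u - y⟫ := by
    have h := sub_le_inner_gradient_of_isMinOn_add (hasGradientAt_const_mul_norm_sub_sq _ z y) hQ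
      hmin u
    rw [real_inner_smul_left] at h
    calc β * (Q y - Q u) ≤ β * (2 * (1 / (2 * β)) * ⟪y - z, u - y⟫) := by gcongr
      _ = ⟪y - z, u - y⟫ := by field_simp
  have hexpand : ‖z - u‖ ^ 2 = ‖z - y‖ ^ 2 + 2 * ⟪y - z, u - y⟫ + ‖y - u‖ ^ 2 := by
    rw [← sub_add_sub_cancel z y u, norm_add_sq_real, ← neg_sub y z, ← neg_sub u y, inner_neg_neg]
  linarith

theorem IsProx.norm_sub_sq_le_of_lipschitzWith {K : ℝ≥0} (hβ : 0 < β)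
    (hQ : ConvexOn ℝ Set.univ Q) (hK : LipschitzWith K Q) (hy : IsProx Q β z y) (u : E) :
    ‖y - u‖ ^ 2 ≤ ‖z - u‖ ^ 2 + (β * K) ^ 2 + 2 * β * (Q u - Q z) := by
  have hlip := hK.le_add_mul z y
  rw [dist_eq_norm] at hlip
  have hβlip : 2 * β * Q z ≤ 2 * β * (Q y + K * ‖z - y‖) := by gcongr
  linarith [hy.norm_sub_sq_le hβ hQ u, two_mul_le_add_sq (β * K) ‖z - y‖]

end ProximalPoint

section ProximalGradientStep

variable {E : Type*} [NormedAddCommGroup E] [InnerProductSpace ℝ E] [CompleteSpace E]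
  {J : Type*} [Fintype J] {G : J → E → ℝ} {c : ℝ≥0} {α : ℝ} {x : E} {y : J → E}

theorem IsProx.norm_sub_sq_le_of_gradient_step {Q : E → ℝ} {K : ℝ≥0} {β : ℝ} {g y : E}
    (hβ : 0 < β) (hα : 0 ≤ α) (hQ : ConvexOn ℝ Set.univ Q) (hK : LipschitzWith K Q)
    (hy : IsProx Q β (x - α • g) y) (u : E) :
    ‖y - u‖ ^ 2 ≤ ‖x - u‖ ^ 2 - 2 * α * ⟪g, x - u⟫ + (α * ‖g‖ + β * K) ^ 2
      + 2 * β * (Q u - Q x) := by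
  have hprox := hy.norm_sub_sq_le_of_lipschitzWith hβ hQ hK u
  have hlip := hK.le_add_mul x (x - α • g)
  rw [dist_eq_norm, sub_sub_cancel, norm_smul, Real.norm_of_nonneg hα] at hlip
  have hβlip : 2 * β * Q x ≤ 2 * β * (Q (x - α • g) + K * (α * ‖g‖)) := by gcongr
  have hstep : ‖x - α • g - u‖ ^ 2 = ‖x - u‖ ^ 2 - 2 * α * ⟪g, x - u⟫ + (α * ‖g‖) ^ 2 := by
    rw [sub_right_comm, norm_sub_sq_real, real_inner_smul_right, real_inner_comm, norm_smul,
      Real.norm_of_nonneg hα]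
    ring
  linarith

theorem expect_norm_prox_sub_sq_le [Nonempty J] {g : E} (hα : 0 < α)
    (hG : ∀ j, ConvexOn ℝ Set.univ (G j)) (hc : ∀ j, LipschitzWith c (G j))
    (hy : ∀ j, IsProx (G j) (Fintype.card J * α) (x - α • g) (y j)) (u : E) :
    𝔼 j, ‖y j - u‖ ^ 2 ≤ ‖x - u‖ ^ 2 - 2 * α * ⟪g, x - u⟫
      + α ^ 2 * (‖g‖ + Fintype.card J * c) ^ 2 + 2 * α * (∑ j, G j u - ∑ j, G j x) := by
  have hβ : 0 < Fintype.card J * α := by positivity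
  calc 𝔼 j, ‖y j - u‖ ^ 2
      ≤ 𝔼 j, (‖x - u‖ ^ 2 - 2 * α * ⟪g, x - u⟫ + (α * ‖g‖ + Fintype.card J * α * c) ^ 2
          + 2 * (Fintype.card J * α) * (G j u - G j x)) :=
        Finset.expect_le_expect fun j _ =>
          (hy j).norm_sub_sq_le_of_gradient_step hβ hα.le (hG j) (hc j) u
    _ = ‖x - u‖ ^ 2 - 2 * α * ⟪g, x - u⟫ + (α * ‖g‖ + Fintype.card J * α * c) ^ 2
          + 2 * α * (Fintype.card J * 𝔼 j, (G j u - G j x)) := by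
        rw [Finset.expect_add_distrib, Fintype.expect_const, ← Finset.mul_expect]
        ring
    _ = _ := by
        rw [Fintype.card_mul_expect, Finset.sum_sub_distrib]
        ring

theorem expect_norm_prox_sub_sq_le_of_isMinOn [Nonempty J] {F : E → ℝ} {gradF : E → E}
    {L : ℝ≥0} {μ : ℝ} (hF : ∀ x, HasGradientAt F (gradF x) x) (hL : LipschitzWith L gradF)
    (hsc : ∀ x y, F x + ⟪gradF x, y - x⟫ + μ / 2 * ‖y - x‖ ^ 2 ≤ F y)
    (hG : ∀ j, ConvexOn ℝ Set.univ (G j)) (hc : ∀ j, LipschitzWith c (G j)) {xstar : E}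
    (hmin : IsMinOn (fun x => F x + ∑ j, G j x) Set.univ xstar) (hα : 0 < α)
    (hy : ∀ j, IsProx (G j) (Fintype.card J * α) (x - α • gradF x) (y j)) :
    𝔼 j, ‖y j - xstar‖ ^ 2 ≤ (1 - (2 * α * μ - 3 * α ^ 2 * L ^ 2)) * ‖x - xstar‖ ^ 2
      + 7 * (Fintype.card J : ℝ) ^ 2 * c ^ 2 * α ^ 2 := by
  set K : ℝ := Fintype.card J * c with hK
  have hlip : LipschitzWith (Fintype.card J * c) fun x => ∑ j, G j x := by
    simpa using lipschitzWith_fintype_sum hc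
  have hmono : ∑ j, G j xstar - ∑ j, G j x + μ * ‖x - xstar‖ ^ 2 ≤ ⟪gradF x, x - xstar⟫ := by
    have hopt := sub_le_inner_gradient_of_isMinOn_add (hF xstar)
      (convexOn_fintype_sum convex_univ hG) hmin x
    have hstrong := mul_norm_sub_sq_le_inner_gradient_sub hsc x xstar
    rw [inner_sub_left] at hstrong
    linarith
  have hgrad : ‖gradF x‖ + K ≤ L * ‖x - xstar‖ + 2 * K := by
    have hstar : ‖gradF xstar‖ ≤ K := by
      simpa using norm_gradient_le_of_isMinOn_add (hF xstar) hlip hmin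
    linarith [hL.norm_sub_le x xstar, norm_le_norm_sub_add (gradF x) (gradF xstar)]
  -- Young: `(a + 2K)² ≤ 3a² + 6K²`, since `4aK ≤ 2a² + 2K²`.
  have hsq : (‖gradF x‖ + K) ^ 2 ≤ 3 * L ^ 2 * ‖x - xstar‖ ^ 2 + 7 * K ^ 2 :=
    calc (‖gradF x‖ + K) ^ 2 ≤ (L * ‖x - xstar‖ + 2 * K) ^ 2 := by gcongr
      _ ≤ 3 * L ^ 2 * ‖x - xstar‖ ^ 2 + 7 * K ^ 2 := by
        linarith [two_mul_le_add_sq (L * ‖x - xstar‖) K, sq_nonneg K]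
  calc 𝔼 j, ‖y j - xstar‖ ^ 2
      ≤ ‖x - xstar‖ ^ 2 - 2 * α * ⟪gradF x, x - xstar⟫ + α ^ 2 * (‖gradF x‖ + K) ^ 2
          + 2 * α * (∑ j, G j xstar - ∑ j, G j x) :=
        expect_norm_prox_sub_sq_le hα hG hc hy xstar
    _ ≤ ‖x - xstar‖ ^ 2 - 2 * α * (∑ j, G j xstar - ∑ j, G j x + μ * ‖x - xstar‖ ^ 2)
          + α ^ 2 * (3 * L ^ 2 * ‖x - xstar‖ ^ 2 + 7 * K ^ 2)
          + 2 * α * (∑ j, G j xstar - ∑ j, G j x) := by gcongr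
    _ = _ := by rw [hK]; ring

end ProximalGradientStep

theorem stepsize_rate_mem_Ioo {α μ L : ℝ} (hα : 0 < α) (hμL : μ ≤ L)
    (hαμ : 3 * α * L ^ 2 < 2 * μ) : 2 * α * μ - 3 * α ^ 2 * L ^ 2 ∈ Set.Ioo 0 1 := by
  have hμ : 0 < μ := by linarith [show 0 ≤ 3 * α * L ^ 2 by positivity]
  have hαL : (α * μ) ^ 2 ≤ (α * L) ^ 2 := by gcongr
  constructor
  · linarith [mul_lt_mul_of_pos_left hαμ hα]
  · linarith [sq_nonneg (3 * (α * μ) - 1), mul_pow α L 2]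

section UniformExpectation

theorem expect_pi_eval {ι J M : Type*} [Fintype ι] [DecidableEq ι] [Fintype J] [Nonempty J]
    [AddCommMonoid M] [Module ℚ≥0 M] (i : ι) (f : J → M) :
    𝔼 s : ι → J, f (s i) = 𝔼 j, f j :=
  calc 𝔼 s : ι → J, f (s i) = 𝔼 p : J × ({i' // i' ≠ i} → J), f p.1 :=
        Fintype.expect_equiv (Equiv.funSplitAt i J) _ _ fun _ => rfl
    _ = 𝔼 j, f j := by
        rw [← Finset.univ_product_univ, Finset.expect_product]
        simp only [Fintype.expect_const]

theorem expect_fin_succ_pi {S M : Type*} [Fintype S] [AddCommMonoid M] [Module ℚ≥0 M] {k : ℕ}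
    (f : (Fin (k + 1) → S) → M) :
    𝔼 σ, f σ = 𝔼 σ : Fin k → S, 𝔼 s, f (Fin.snoc σ s) := by
  rw [Finset.expect_comm, ← Finset.expect_product', Finset.univ_product_univ]
  exact (Fintype.expect_equiv (Fin.snocEquiv fun _ => S) _ _ fun _ => rfl).symm

theorem expect_le_sqrt_expect_sq {Ω : Type*} [Fintype Ω] [Nonempty Ω] (f : Ω → ℝ) :
    𝔼 ω, f ω ≤ √(𝔼 ω, f ω ^ 2) :=
  Real.le_sqrt_of_sq_le <| by
    simpa only [mul_one, one_pow, Fintype.expect_const] using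
      Finset.expect_mul_sq_le_sq_mul_sq Finset.univ f fun _ => 1

theorem expect_foldl_le {X S : Type*} [Fintype S] [Nonempty S] {step : X → S → X} {V : X → ℝ}
    {ρ δ : ℝ} (hρ₀ : 0 ≤ ρ) (hρ₁ : ρ < 1) (hδ : 0 ≤ δ)
    (hstep : ∀ x, 𝔼 s, V (step x s) ≤ ρ * V x + δ) (x₀ : X) (k : ℕ) :
    𝔼 σ : Fin k → S, V (Fin.foldl k (fun x t => step x (σ t)) x₀) ≤
      ρ ^ k * V x₀ + δ / (1 - ρ) := by
  have hgap : 0 < 1 - ρ := sub_pos.2 hρ₁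
  induction k with
  | zero =>
    simp only [Fin.foldl_zero, Fintype.expect_const, pow_zero, one_mul]
    exact le_add_of_nonneg_right (by positivity)
  | succ k ih =>
    rw [expect_fin_succ_pi]
    simp only [Fin.foldl_succ_last, Fin.snoc_castSucc, Fin.snoc_last]
    calc 𝔼 σ : Fin k → S, 𝔼 s, V (step (Fin.foldl k (fun x t => step x (σ t)) x₀) s)
        ≤ 𝔼 σ : Fin k → S, (ρ * V (Fin.foldl k (fun x t => step x (σ t)) x₀) + δ) :=
          Finset.expect_le_expect fun σ _ => hstep _
      _ = ρ * 𝔼 σ : Fin k → S, V (Fin.foldl k (fun x t => step x (σ t)) x₀) + δ := by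
          rw [Finset.expect_add_distrib, ← Finset.mul_expect, Fintype.expect_const]
      _ ≤ ρ * (ρ ^ k * V x₀ + δ / (1 - ρ)) + δ := by gcongr
      _ = ρ ^ (k + 1) * V x₀ + δ / (1 - ρ) := by field_simp; ring

theorem expect_mul_sq_add_mul_le {Ω : Type*} [Fintype Ω] [Nonempty Ω] {f : Ω → ℝ}
    {a b ρ d Δ : ℝ} {k : ℕ} (ha : 0 ≤ a) (hb : 0 ≤ b) (hρ₀ : 0 ≤ ρ) (hρ₁ : ρ ≤ 1) (hd : 0 ≤ d)
    (hΔ : 0 ≤ Δ) (hf : 𝔼 ω, f ω ^ 2 ≤ ρ ^ k * d ^ 2 + Δ) :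
    𝔼 ω, (a * f ω ^ 2 + b * f ω) ≤
      (a * d ^ 2 + b * d) * ρ ^ ((k : ℝ) / 2) + a * Δ + b * √Δ := by
  set r : ℝ := ρ ^ ((k : ℝ) / 2) with hr
  have hr₀ : 0 ≤ r := Real.rpow_nonneg hρ₀ _
  have hr₁ : r ≤ 1 := Real.rpow_le_one hρ₀ hρ₁ (by positivity)
  have hr_sq : ρ ^ k = r ^ 2 := by
    rw [hr, Real.rpow_div_two_eq_sqrt _ hρ₀, Real.rpow_natCast, ← pow_mul, mul_comm, pow_mul,
      Real.sq_sqrt hρ₀]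
  rw [hr_sq] at hf
  have hsecond : 𝔼 ω, f ω ^ 2 ≤ r * d ^ 2 + Δ :=
    hf.trans (by gcongr; exact pow_le_of_le_one hr₀ hr₁ two_ne_zero)
  have hfirst : 𝔼 ω, f ω ≤ r * d + √Δ :=
    calc 𝔼 ω, f ω ≤ √(r ^ 2 * d ^ 2 + Δ) :=
          (expect_le_sqrt_expect_sq f).trans (Real.sqrt_le_sqrt hf)
      _ ≤ r * d + √Δ := by
          refine Real.sqrt_le_iff.2 ⟨by positivity, ?_⟩
          have hcross : 0 ≤ r * d * √Δ := by positivity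
          linarith [add_sq (r * d) √Δ, mul_pow r d 2, Real.sq_sqrt hΔ]
  calc 𝔼 ω, (a * f ω ^ 2 + b * f ω) = a * 𝔼 ω, f ω ^ 2 + b * 𝔼 ω, f ω := by
        rw [Finset.expect_add_distrib, ← Finset.mul_expect, ← Finset.mul_expect]
    _ ≤ a * (r * d ^ 2 + Δ) + b * (r * d + √Δ) := by gcongr
    _ = (a * d ^ 2 + b * d) * r + a * Δ + b * √Δ := by ring

theorem uniform_average_eq_expect {n m k : ℕ} (f : (Fin k → Fin n → Fin m) → ℝ) :
    1 / (m : ℝ) ^ (n * k) * ∑ σ, f σ = 𝔼 σ, f σ := by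
  rw [Fintype.expect_eq_sum_div_card, one_div_mul_eq_div]
  simp [pow_mul]

end UniformExpectation

section BlockProx

variable {κ ι J : Type*}

/-- The vector whose `i`-th block is copied from `y (s i)`. Block decompositions of `ℝ^κ` are
encoded by the map `block : κ → ι` sending a coordinate to its block, so blocks may have
different sizes. -/
def blockAssemble (block : κ → ι) (y : J → EuclideanSpace ℝ κ) (s : ι → J) :
    EuclideanSpace ℝ κ :=
  WithLp.toLp 2 fun a => y (s (block a)) a

/-- One BlockProx step from `x` with index draw `s`: block `i` of the result is block `i` of the
proximal map `prox (s i)` at the gradient step from `x`. The proximal parameter is part of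
`prox`. -/
def blockProxStep (block : κ → ι) (gradF : EuclideanSpace ℝ κ → EuclideanSpace ℝ κ)
    (prox : J → EuclideanSpace ℝ κ → EuclideanSpace ℝ κ) (α : ℝ) (x : EuclideanSpace ℝ κ)
    (s : ι → J) : EuclideanSpace ℝ κ :=
  blockAssemble block (fun j => prox j (x - α • gradF x)) s

/-- The BlockProx iterate `x^{(k)}` as a function of the draws `σ 0, …, σ (k - 1)`, so that its
expectation is the average over all `σ`. -/
def blockProxIterate (block : κ → ι) (gradF : EuclideanSpace ℝ κ → EuclideanSpace ℝ κ)
    (prox : J → EuclideanSpace ℝ κ → EuclideanSpace ℝ κ) (α : ℝ) (x₀ : EuclideanSpace ℝ κ)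
    {k : ℕ} (σ : Fin k → ι → J) : EuclideanSpace ℝ κ :=
  Fin.foldl k (fun x t => blockProxStep block gradF prox α x (σ t)) x₀

theorem eq_blockProxIterate {block : κ → ι} {gradF : EuclideanSpace ℝ κ → EuclideanSpace ℝ κ}
    {prox : J → EuclideanSpace ℝ κ → EuclideanSpace ℝ κ} {α : ℝ} {x₀ : EuclideanSpace ℝ κ}
    {ω : ℕ → ι → J} {X : ℕ → EuclideanSpace ℝ κ} (hX₀ : X 0 = x₀)
    (hX : ∀ t a, X (t + 1) a = prox (ω t (block a)) (X t - α • gradF (X t)) a) (k : ℕ) :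
    X k = blockProxIterate block gradF prox α x₀ fun t : Fin k => ω t := by
  induction k with
  | zero => exact hX₀
  | succ k ih =>
    have hlast : blockProxIterate block gradF prox α x₀ (fun t : Fin (k + 1) => ω t) =
        blockProxStep block gradF prox α (X k) (ω k) := by
      rw [ih]
      exact Fin.foldl_succ_last _ _
    rw [hlast]
    ext a
    exact hX k a

variable [Fintype κ] [Fintype ι] [DecidableEq ι] [Fintype J] [Nonempty J]

theorem expect_norm_blockAssemble_sub_sq (block : κ → ι) (y : J → EuclideanSpace ℝ κ)
    (u : EuclideanSpace ℝ κ) :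
    𝔼 s, ‖blockAssemble block y s - u‖ ^ 2 = 𝔼 j, ‖y j - u‖ ^ 2 := by
  simp only [EuclideanSpace.norm_sq_eq, PiLp.sub_apply, blockAssemble, Finset.expect_sum_comm]
  exact Finset.sum_congr rfl fun a _ => expect_pi_eval (block a) fun j => ‖y j a - u a‖ ^ 2

theorem expect_norm_blockProxIterate_sub_sq_le {block : κ → ι}
    {gradF : EuclideanSpace ℝ κ → EuclideanSpace ℝ κ}
    {prox : J → EuclideanSpace ℝ κ → EuclideanSpace ℝ κ} {α ρ δ : ℝ} {u : EuclideanSpace ℝ κ}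
    (hρ₀ : 0 ≤ ρ) (hρ₁ : ρ < 1) (hδ : 0 ≤ δ)
    (hstep : ∀ x, 𝔼 j, ‖prox j (x - α • gradF x) - u‖ ^ 2 ≤ ρ * ‖x - u‖ ^ 2 + δ)
    (x₀ : EuclideanSpace ℝ κ) (k : ℕ) :
    𝔼 σ : Fin k → ι → J, ‖blockProxIterate block gradF prox α x₀ σ - u‖ ^ 2 ≤
      ρ ^ k * ‖x₀ - u‖ ^ 2 + δ / (1 - ρ) :=
  expect_foldl_le (V := fun x => ‖x - u‖ ^ 2) hρ₀ hρ₁ hδ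
    (fun x => (expect_norm_blockAssemble_sub_sq block _ u).trans_le (hstep x)) x₀ k

end BlockProx

theorem blockprox_objective_linear_convergence_neighborhood_general
    {κ ι J : Type*} [Fintype κ] [Nonempty κ] [Fintype ι] [DecidableEq ι] [Fintype J] [Nonempty J]
    (block : κ → ι) {c L : ℝ≥0} {μ : ℝ} {F : EuclideanSpace ℝ κ → ℝ}
    {gradF : EuclideanSpace ℝ κ → EuclideanSpace ℝ κ}
    (hF : ∀ x, HasGradientAt F (gradF x) x) (hL : LipschitzWith L gradF)
    (hsc : ∀ x y, F x + ⟪gradF x, y - x⟫ + μ / 2 * ‖y - x‖ ^ 2 ≤ F y)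
    {G : J → EuclideanSpace ℝ κ → ℝ} (hG : ∀ j, ConvexOn ℝ Set.univ (G j))
    (hc : ∀ j, LipschitzWith c (G j)) {H : EuclideanSpace ℝ κ → ℝ}
    (hH : ∀ x, H x = F x + ∑ j, G j x) {xstar : EuclideanSpace ℝ κ}
    (hmin : IsMinOn H Set.univ xstar) {α : ℝ} (hα : 0 < α) (hαμ : 3 * α * L ^ 2 < 2 * μ)
    {Γ δ : ℝ} (hΓ : Γ = 2 * α * μ - 3 * α ^ 2 * L ^ 2)
    (hδ : δ = 7 * (Fintype.card J : ℝ) ^ 2 * c ^ 2 * α ^ 2)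
    {prox : J → EuclideanSpace ℝ κ → EuclideanSpace ℝ κ}
    (hprox : ∀ j z, IsProx (G j) (Fintype.card J * α) z (prox j z))
    (x₀ : EuclideanSpace ℝ κ) (k : ℕ) :
    𝔼 σ : Fin k → ι → J, (H (blockProxIterate block gradF prox α x₀ σ) - H xstar) ≤
      (L / 2 * ‖x₀ - xstar‖ ^ 2 + 2 * Fintype.card J * c * ‖x₀ - xstar‖) * (1 - Γ) ^ ((k : ℝ) / 2)
        + L * δ / (2 * Γ) + 2 * Fintype.card J * c * √(δ / Γ) := by
  obtain rfl : H = fun x => F x + ∑ j, G j x := funext hH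
  obtain ⟨hΓ₀, hΓ₁⟩ : Γ ∈ Set.Ioo 0 1 :=
    hΓ ▸ stepsize_rate_mem_Ioo hα (strongConvexity_const_le_lipschitz_const hsc hL) hαμ
  have hδ₀ : 0 ≤ δ := hδ ▸ by positivity
  have hlip : LipschitzWith (Fintype.card J * c) fun x => ∑ j, G j x := by
    simpa using lipschitzWith_fintype_sum hc
  have hdist := expect_norm_blockProxIterate_sub_sq_le (block := block) (δ := δ)
    (sub_nonneg.2 hΓ₁.le) (sub_lt_self 1 hΓ₀) hδ₀ (fun x => by
      rw [hΓ, hδ]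
      exact expect_norm_prox_sub_sq_le_of_isMinOn hF hL hsc hG hc hmin hα fun j => hprox j _) x₀ k
  rw [sub_sub_cancel] at hdist
  have hgap := expect_mul_sq_add_mul_le (a := L / 2) (b := 2 * (Fintype.card J * c))
    (by positivity) (by positivity) (sub_nonneg.2 hΓ₁.le) (sub_le_self 1 hΓ₀.le)
    (norm_nonneg (x₀ - xstar)) (by positivity) hdist
  calc _ ≤ _ := Finset.expect_le_expect fun σ _ => by
        simpa using sub_le_norm_sq_add_norm_of_isMinOn_add hF hL hlip hmin
          (blockProxIterate block gradF prox α x₀ σ)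
    _ ≤ _ := hgap
    _ = _ := by field_simp

/-- **Objective-gap linear convergence of BlockProx to a neighborhood.**
Under the hypotheses of the linear-rate theorem (`F` differentiable, `L`-smooth,
`μ`-strongly convex; each `G_j` convex and `c`-Lipschitz; `H = F + ∑_j G_j` minimized at
`x*`; constant stepsize `0 < α < 2μ/(3L²)`, `β = mα`), with `Γ = 2αμ − 3α²L²` and
`δ = 7m²c²α²`, for every `k`:
`E[H(x^{(k)}) − H(x*)]
  ≤ ((L/2)‖x⁰ − x*‖² + 2mc‖x⁰ − x*‖)(1 − Γ)^{k/2} + Lδ/(2Γ) + 2mc√(δ/Γ)`,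
the expectation being the uniform average over the i.i.d. uniform index configurations. -/
theorem blockprox_objective_linear_convergence_neighborhood
    (n m d : ℕ) (hn : 0 < n) (hm : 0 < m) (hd : 0 < d)
    (c L μ : ℝ) (hc : 0 ≤ c) (hL : 0 < L) (hμ : 0 < μ)
    (F : EuclideanSpace ℝ (Fin n × Fin d) → ℝ)
    (gradF : EuclideanSpace ℝ (Fin n × Fin d) → EuclideanSpace ℝ (Fin n × Fin d))
    (hdiff : ∀ x, HasGradientAt F (gradF x) x)
    (hlip : ∀ x y, ‖gradF x - gradF y‖ ≤ L * ‖x - y‖)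
    (hsc : ∀ x y, F x + ⟪gradF x, y - x⟫ + (μ / 2) * ‖y - x‖ ^ 2 ≤ F y)
    (Gj : Fin m → EuclideanSpace ℝ (Fin n × Fin d) → ℝ)
    (hGconv : ∀ j, ConvexOn ℝ Set.univ (Gj j))
    (hGlip : ∀ j, LipschitzWith c.toNNReal (Gj j))
    (H : EuclideanSpace ℝ (Fin n × Fin d) → ℝ)
    (hHdef : ∀ x, H x = F x + ∑ j, Gj j x)
    (xstar : EuclideanSpace ℝ (Fin n × Fin d))
    (hxstar : ∀ y, H xstar ≤ H y)
    (α : ℝ) (hα : 0 < α) (hαub : α < 2 * μ / (3 * L ^ 2))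
    (Γ δ : ℝ) (hΓ : Γ = 2 * α * μ - 3 * α ^ 2 * L ^ 2)
    (hδ : δ = 7 * (m : ℝ) ^ 2 * c ^ 2 * α ^ 2)
    (prox : Fin m → ℝ → EuclideanSpace ℝ (Fin n × Fin d) → EuclideanSpace ℝ (Fin n × Fin d))
    (hprox : ∀ (j : Fin m) (β : ℝ) (z : EuclideanSpace ℝ (Fin n × Fin d)), 0 < β →
      IsMinOn (fun u => Gj j u + (1 / (2 * β)) * ‖z - u‖ ^ 2) Set.univ (prox j β z))
    (x0 : EuclideanSpace ℝ (Fin n × Fin d))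
    (X : ℕ → (ℕ → Fin n → Fin m) → EuclideanSpace ℝ (Fin n × Fin d))
    (hX0 : ∀ ω, X 0 ω = x0)
    (hXrec : ∀ t ω (i : Fin n) (a : Fin d),
      X (t + 1) ω (i, a)
        = prox (ω t i) ((m : ℝ) * α) (X t ω - α • gradF (X t ω)) (i, a))
    (k : ℕ) :
    (1 / (m : ℝ) ^ (n * k)) *
        ∑ σ : Fin k → Fin n → Fin m,
          (H (X k (fun t i => if h : t < k then σ ⟨t, h⟩ i else ⟨0, hm⟩)) - H xstar)
      ≤ ((L / 2) * ‖x0 - xstar‖ ^ 2 + 2 * m * c * ‖x0 - xstar‖)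
            * (1 - Γ) ^ ((k : ℝ) / 2)
        + L * δ / (2 * Γ) + 2 * m * c * Real.sqrt (δ / Γ) := by
  have : NeZero n := ⟨hn.ne'⟩
  have : NeZero m := ⟨hm.ne'⟩
  have : NeZero d := ⟨hd.ne'⟩
  lift c to ℝ≥0 using hc
  lift L to ℝ≥0 using hL.le
  rw [Real.toNNReal_coe] at hGlip
  rw [lt_div_iff₀ (by positivity)] at hαub
  have hprox' (j z) : IsProx (Gj j) (Fintype.card (Fin m) * α) z (prox j (m * α) z) := by
    rw [Fintype.card_fin]
    exact hprox j _ z (by positivity)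
  have hgap := blockprox_objective_linear_convergence_neighborhood_general
    (Prod.fst : Fin n × Fin d → Fin n) hdiff (lipschitzWith_iff_norm_sub_le.2 hlip) hsc hGconv hGlip
    hHdef (isMinOn_univ_iff.2 hxstar) hα (by linarith) hΓ (by simpa using hδ)
    hprox' x0 k
  have hX (ω) := eq_blockProxIterate (block := Prod.fst) (gradF := gradF) (α := α)
    (prox := fun j => prox j (m * α)) (X := (X · ω)) (hX0 ω) (fun t a => hXrec t ω a.1 a.2) k
  rw [uniform_average_eq_expect]
  simpa [hX] using hgap
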